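/- Let f = ∑_{i≥r} f_i ∈ ℂ[x₁,…,xₙ] with f_r ≠ 0 and each f_i zero or homogeneous of degree i. For a positive integer k let d_k = lcm(1,…,k) and let J_k(f) be the ideal generated by f_{r+i}^{d_k/(k−i)} for 0 ≤ i ≤ k−1. Then (r+k)·c_0(f) ≤ n + d_k · c(J_k(f)). In particular, for k = 2: (r+2)·c_0(f) ≤ n + 2·c((f_r, f_{r+1}²)). -/

import Mathlib

/-!
The inequality comes from an upper bound for `‖f‖` along segments through the origin. Write
`f_i` for the homogeneous components of `f`, let `F` be the sum of `‖g‖²` over the generators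
`g = f_{r+i}^{d/(k-i)}` of the ideal, and put `φ = F^{1/(2d)}`, so that `‖f_{r+i}(x)‖ ≤ φ(x)^{k-i}`
for `i < k`. For `0 ≤ τ ≤ min(φ(x), 1)` and `x` in a bounded set, each term of
`f(τx) = ∑ τ^i f_i(x)` is `O(φ^{r+k})`, hence `‖f(τx)‖ ≤ C φ(x)^{r+k}` (`norm_eval_smul_le`).

Suppose `‖f‖^{-2s}` is integrable near `0`, and let `n + d t < (r+k) s`. With
`β = 2((r+k)s - dt) > 2n`, the bound above at a dyadic scale `τ_j` comparable with `φ(x)` gives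
`F(x)^{-t} = φ(x)^{-2dt} ≤ A τ_j^β ‖f(τ_j x)‖^{-2s}`. Integrate the sum of the right-hand sides over
all `j` on a ball and substitute `x ↦ τ_j x`, which contributes the Jacobian `τ_j^{-2n}`: the result
is at most a constant times `∑_j τ_j^{β-2n} < ∞`. So `F^{-t}` is integrable on every ball
(`integrableOn_ball`), that is, the threshold of the ideal is at least `t` at each of its zeros.

Two facts keep the suprema and the real powers meaningful: a nonzero polynomial vanishes only on a
null set (`ae_eval_ne_zero`), and the local thresholds of a nonzero ideal at its zeros are bounded
(`bddAbove_lctIdealAt`). Taking `d = lcm(1,…,k)`, and then `k = d = 2`, in `lct_bound` yields the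
two inequalities.
-/

open MeasureTheory MvPolynomial

/-- The log-canonical threshold of a polynomial `f ∈ ℂ[x₁,…,xₙ]` at a point `y`
(with `f(y) = 0`), defined analytically as the supremum of the positive reals `s`
such that `‖f‖^{-2s}` is integrable on some neighbourhood of `y`. -/
noncomputable def lctAt {n : ℕ} (f : MvPolynomial (Fin n) ℂ) (y : Fin n → ℂ) : ℝ :=
  sSup {s : ℝ | 0 < s ∧ ∃ U ∈ nhds y,
    MeasureTheory.IntegrableOn
      (fun x : Fin n → ℂ => ‖MvPolynomial.eval x f‖ ^ (-2 * s)) U}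

/-- The (global) log-canonical threshold of `f`, the infimum of the local
log-canonical thresholds over the zeros of `f`. -/
noncomputable def lct {n : ℕ} (f : MvPolynomial (Fin n) ℂ) : ℝ :=
  sInf {c : ℝ | ∃ y, MvPolynomial.eval y f = 0 ∧ c = lctAt f y}
/-- The log-canonical threshold of an ideal `I ⊆ ℂ[x₁,…,xₙ]` at a point `y`,
defined analytically: the supremum of the positive reals `s` such that, for a
finite generating set `g₁,…,g_m` of `I`, the function `(∑ ‖gᵢ‖²)^{-s}` is
integrable on some neighbourhood of `y`. -/
noncomputable def lctIdealAt {n : ℕ} (I : Ideal (MvPolynomial (Fin n) ℂ))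
    (y : Fin n → ℂ) : ℝ :=
  sSup {s : ℝ | 0 < s ∧ ∃ G : Finset (MvPolynomial (Fin n) ℂ),
    Ideal.span (G : Set (MvPolynomial (Fin n) ℂ)) = I ∧
    ∃ U ∈ nhds y, MeasureTheory.IntegrableOn
      (fun x : Fin n → ℂ => (∑ g ∈ G, ‖MvPolynomial.eval x g‖ ^ 2) ^ (-s)) U}

/-- The (global) log-canonical threshold of an ideal: the infimum of the local
thresholds over the zero set of the ideal (for the zero ideal this gives `0`,
matching the convention `c(0) = 0`). -/
noncomputable def lctIdeal {n : ℕ} (I : Ideal (MvPolynomial (Fin n) ℂ)) : ℝ :=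
  sInf {c : ℝ | ∃ y : Fin n → ℂ, (∀ g ∈ I, MvPolynomial.eval y g = 0) ∧ c = lctIdealAt I y}

/-! ### Zero sets of polynomials are null -/

lemma continuous_evalPoly {n : ℕ} (p : MvPolynomial (Fin n) ℂ) :
    Continuous (fun x : Fin n → ℂ => eval x p) :=
  MvPolynomial.continuous_eval p

/-- The proof is by induction on `n`, slicing along the first coordinate. -/
lemma ae_eval_ne_zero : ∀ {n : ℕ} (p : MvPolynomial (Fin n) ℂ), p ≠ 0 →
    ∀ᵐ x : Fin n → ℂ, eval x p ≠ 0
  | 0, p, hp => by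
      refine Filter.Eventually.of_forall fun x hx => hp (MvPolynomial.funext fun y => ?_)
      rw [Subsingleton.elim y x, hx, map_zero]
  | n + 1, p, hp => by
      have hq : finSuccEquiv ℂ n p ≠ 0 := by simpa using hp
      have hc : (finSuccEquiv ℂ n p).leadingCoeff ≠ 0 := by simpa using hp
      have ih := ae_eval_ne_zero _ hc
      let e := MeasurableEquiv.piFinSuccAbove (fun _ : Fin (n + 1) => ℂ) 0
      have he : MeasurePreserving e.symm volume volume :=
        (volume_preserving_piFinSuccAbove (fun _ : Fin (n + 1) => ℂ) 0).symm
      have hes : ∀ y x, e.symm (y, x) = (Fin.cons y x : Fin (n + 1) → ℂ) := by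
        intro y x
        simp [e, MeasurableEquiv.piFinSuccAbove, Fin.insertNthEquiv]
      have hcl : MeasurableSet {x : Fin (n + 1) → ℂ | eval x p = 0} :=
        (isClosed_eq (continuous_evalPoly p) continuous_const).measurableSet
      have hcl' := he.measurable hcl
      have key : (volume : Measure (ℂ × (Fin n → ℂ)))
          (e.symm ⁻¹' {x : Fin (n + 1) → ℂ | eval x p = 0}) = 0 := by
        rw [Measure.volume_eq_prod, Measure.prod_apply_symm hcl']
        rw [lintegral_eq_zero_iff (measurable_measure_prodMk_right hcl')]
        -- Off the zeros of the leading coefficient, each slice is the root set of a nonzero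
        -- univariate polynomial.
        filter_upwards [ih] with x hx
        refine Set.Finite.measure_zero ?_ _
        have hne : Polynomial.map (eval x) (finSuccEquiv ℂ n p) ≠ 0 := by
          intro h0
          apply hx
          have := congrArg (fun q => Polynomial.coeff q (finSuccEquiv ℂ n p).natDegree) h0
          simpa [Polynomial.coeff_map] using this
        refine (Polynomial.map (eval x) (finSuccEquiv ℂ n p)).rootSet_finite ℂ |>.subset ?_
        intro y hy
        rw [Polynomial.mem_rootSet]
        refine ⟨hne, ?_⟩
        have hy' : eval (e.symm (y, x)) p = 0 := hy
        rw [hes, eval_eq_eval_mv_eval'] at hy'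
        simpa using hy'
      rw [he.measure_preimage hcl.nullMeasurableSet] at key
      simpa [ae_iff] using key

/-! ### Dilations -/

lemma eval_smul_homogeneousComponent {n : ℕ} (f : MvPolynomial (Fin n) ℂ) (i : ℕ) (τ : ℝ)
    (x : Fin n → ℂ) :
    eval (τ • x) (homogeneousComponent i f) = (τ : ℂ) ^ i * eval x (homogeneousComponent i f) := by
  have hh := homogeneousComponent_isHomogeneous i f
  rw [eval_eq, eval_eq, Finset.mul_sum]
  refine Finset.sum_congr rfl fun m hm => ?_
  have hd : ∑ j, m j = i := by
    have := hh (mem_support_iff.1 hm)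
    rw [Finsupp.weight_apply, Finsupp.sum_fintype _ _ (by simp)] at this
    simpa using this
  have h1 : ∏ j ∈ m.support, (τ • x) j ^ m j = (τ : ℂ) ^ i * ∏ j ∈ m.support, x j ^ m j := by
    simp only [Pi.smul_apply, Complex.real_smul, mul_pow, Finset.prod_mul_distrib]
    rw [Finset.prod_pow_eq_pow_sum]
    congr 2
    rw [← hd]
    exact Finset.sum_subset (Finset.subset_univ _) (by simp)
  rw [h1]; ring

/-- The elementary estimate behind the theorem: if `‖f_{r+i}(x)‖ ≤ φ^{k-i}` for `i < k`, then
`f(τx)` is of size `O(φ^{r+k})` for `0 ≤ τ ≤ min(φ, 1)`, uniformly for `x` in a ball. -/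
lemma norm_eval_smul_le {n : ℕ} (f : MvPolynomial (Fin n) ℂ) (r k : ℕ)
    (hlow : ∀ i < r, homogeneousComponent i f = 0) (R : ℝ) :
    ∃ C : ℝ, 0 < C ∧ ∀ x ∈ Metric.ball (0 : Fin n → ℂ) R, ∀ φ τ : ℝ, 0 ≤ τ → τ ≤ φ → τ ≤ 1 →
      (∀ i < k, ‖eval x (homogeneousComponent (r + i) f)‖ ≤ φ ^ (k - i)) →
      ‖eval (τ • x) f‖ ≤ C * φ ^ (r + k) := by
  have hB : ∀ i, ∃ C : ℝ, ∀ x ∈ Metric.closedBall (0 : Fin n → ℂ) R,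
      ‖eval x (homogeneousComponent i f)‖ ≤ C := fun i =>
    (isCompact_closedBall 0 R).exists_bound_of_continuousOn (continuous_evalPoly _).continuousOn
  choose C hC using hB
  refine ⟨1 + ∑ i ∈ Finset.range (f.totalDegree + 1), (1 + |C i|), by positivity, ?_⟩
  intro x hx φ τ hτ hτφ hτ1 hi
  have hφ : 0 ≤ φ := hτ.trans hτφ
  have hx' : x ∈ Metric.closedBall (0 : Fin n → ℂ) R := Metric.ball_subset_closedBall hx
  have hterm : ∀ i ∈ Finset.range (f.totalDegree + 1),
      ‖eval (τ • x) (homogeneousComponent i f)‖ ≤ (1 + |C i|) * φ ^ (r + k) := by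
    intro i _
    have hpos : 0 ≤ φ ^ (r + k) := by positivity
    rcases lt_or_ge i r with h | h
    · rw [hlow i h]; simp only [map_zero, norm_zero]; positivity
    obtain ⟨j, rfl⟩ := Nat.exists_eq_add_of_le h
    rw [eval_smul_homogeneousComponent, norm_mul, norm_pow, Complex.norm_real,
      Real.norm_of_nonneg hτ]
    rcases lt_or_ge j k with hj | hj
    · calc τ ^ (r + j) * ‖eval x (homogeneousComponent (r + j) f)‖
          ≤ φ ^ (r + j) * φ ^ (k - j) := by gcongr; exact hi j hj
        _ = φ ^ (r + k) := by rw [← pow_add]; congr 1; omega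
        _ ≤ (1 + |C (r + j)|) * φ ^ (r + k) := by nlinarith [abs_nonneg (C (r + j))]
    · have h1 : τ ^ (r + j) ≤ φ ^ (r + k) :=
        (pow_le_pow_of_le_one hτ hτ1 (by omega)).trans (pow_le_pow_left₀ hτ hτφ _)
      calc τ ^ (r + j) * ‖eval x (homogeneousComponent (r + j) f)‖
          ≤ φ ^ (r + k) * |C (r + j)| := by
            gcongr; exact (hC _ x hx').trans (le_abs_self _)
        _ ≤ (1 + |C (r + j)|) * φ ^ (r + k) := by nlinarith
  calc ‖eval (τ • x) f‖
      = ‖∑ i ∈ Finset.range (f.totalDegree + 1), eval (τ • x) (homogeneousComponent i f)‖ := by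
        rw [← map_sum, sum_homogeneousComponent]
    _ ≤ ∑ i ∈ Finset.range (f.totalDegree + 1), (1 + |C i|) * φ ^ (r + k) :=
        norm_sum_le_of_le _ hterm
    _ ≤ _ := by
        rw [← Finset.sum_mul]
        have : 0 ≤ φ ^ (r + k) := by positivity
        nlinarith

lemma setLIntegral_comp_smul {n : ℕ} {h : (Fin n → ℂ) → ENNReal} (hh : Measurable h) (R : ℝ)
    {τ : ℝ} (hτ : 0 < τ) :
    ∫⁻ x in Metric.ball (0 : Fin n → ℂ) R, h (τ • x) =
      ENNReal.ofReal ((τ ^ (2 * n))⁻¹) * ∫⁻ x in Metric.ball (0 : Fin n → ℂ) (τ * R), h x := by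
  have hfr : Module.finrank ℝ (Fin n → ℂ) = 2 * n := by
    rw [Module.finrank_pi_fintype]; simp [Complex.finrank_real_complex, mul_comm]
  have hpre : (fun x : Fin n → ℂ => τ • x) ⁻¹' (Metric.ball 0 (τ * R)) = Metric.ball 0 R := by
    ext x
    simp [norm_smul, abs_of_pos hτ, hτ]
  have hm : Measurable (fun x : Fin n → ℂ => τ • x) := measurable_const_smul τ
  have := Measure.map_addHaar_smul (volume : Measure (Fin n → ℂ)) hτ.ne'
  rw [hfr, abs_of_pos (by positivity)] at this
  rw [← smul_eq_mul, ← lintegral_smul_measure, ← Measure.restrict_smul, ← this,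
    ← lintegral_indicator measurableSet_ball, ← lintegral_indicator measurableSet_ball,
    lintegral_map (hh.indicator measurableSet_ball) hm]
  refine lintegral_congr fun x => ?_
  rw [← hpre]
  simp [Set.indicator]

/-! ### Boundedness of the local thresholds of an ideal -/

lemma measurable_sum_rpow {n : ℕ} (G : Finset (MvPolynomial (Fin n) ℂ)) (a : ℝ) :
    Measurable (fun x : Fin n → ℂ => (∑ g ∈ G, ‖eval x g‖ ^ 2) ^ a) := by
  have : Measurable (fun x : Fin n → ℂ => ∑ g ∈ G, ‖eval x g‖ ^ 2) :=
    (continuous_finsetSum _ fun g _ => (continuous_evalPoly g).norm.pow 2).measurable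
  exact this.pow_const a

/-- At a zero `y` of a nonzero ideal the threshold is at most `n`: the sum of squares is
`O(‖x - y‖²)`, and `‖x - y‖^{-2t}` is not integrable near `y` in real dimension `2n` for `t > n`.
Hence the supremum defining `lctIdealAt I y` is a genuine one. -/
lemma bddAbove_lctIdealAt {n : ℕ} (I : Ideal (MvPolynomial (Fin n) ℂ)) (hI : I ≠ ⊥)
    (y : Fin n → ℂ) (hy : ∀ g ∈ I, eval y g = 0) :
    BddAbove {s : ℝ | 0 < s ∧ ∃ G : Finset (MvPolynomial (Fin n) ℂ),
      Ideal.span (G : Set (MvPolynomial (Fin n) ℂ)) = I ∧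
      ∃ U ∈ nhds y, IntegrableOn
        (fun x : Fin n → ℂ => (∑ g ∈ G, ‖eval x g‖ ^ 2) ^ (-s)) U} := by
  refine ⟨n, ?_⟩
  rintro t ⟨ht, G, hG, U, hU, hint⟩
  by_contra! hnt
  set F : (Fin n → ℂ) → ℝ := fun x => ∑ g ∈ G, ‖eval x g‖ ^ 2 with hF
  obtain ⟨g₀, hg₀, hg₀'⟩ : ∃ g ∈ G, g ≠ 0 := by
    by_contra! hcon
    apply hI
    rw [← hG, Ideal.span_eq_bot]
    exact fun g hg => hcon g hg
  have hO : F =O[nhds y] fun x => ‖x - y‖ ^ 2 := by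
    refine Asymptotics.IsBigO.fun_sum (A := fun g (x : Fin n → ℂ) => ‖eval x g‖ ^ 2) fun g hg => ?_
    have hd : DifferentiableAt ℂ (fun x : Fin n → ℂ => eval x g) y :=
      (AnalyticOnNhd.eval_mvPolynomial g y (Set.mem_univ y)).differentiableAt
    have := hd.isBigO_sub
    rw [hy g (hG ▸ Ideal.subset_span hg)] at this
    simp only [sub_zero] at this
    exact this.norm_norm.pow 2
  obtain ⟨C, hC, hCb⟩ := hO.exists_pos
  obtain ⟨ρ₀, hρ₀, hball⟩ := Metric.mem_nhds_iff.1 (Filter.inter_mem hU hCb.bound)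
  set M : ENNReal := ∫⁻ x in U, ENNReal.ofReal ((F x) ^ (-t)) with hM
  have hMtop : M < ⊤ := hint.lintegral_lt_top
  have hfr : Module.finrank ℝ (Fin n → ℂ) = 2 * n := by
    rw [Module.finrank_pi_fintype]; simp [Complex.finrank_real_complex, mul_comm]
  set m : ℝ := (volume (Metric.ball (0 : Fin n → ℂ) 1)).toReal with hm
  have hmpos : 0 < m := ENNReal.toReal_pos
    (Metric.measure_ball_pos _ _ one_pos).ne' measure_ball_lt_top.ne
  -- Comparing integrals over `ball y ρ`: the integrand is at least `(C ρ²)^{-t}` there.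
  have hbound : ∀ ρ : ℝ, 0 < ρ → ρ < ρ₀ → ρ ^ (2 * (n : ℝ) - 2 * t) ≤ M.toReal / (m * C ^ (-t)) := by
    intro ρ hρ hρρ₀
    rw [le_div_iff₀ (by positivity)]
    have hsub : Metric.ball y ρ ⊆ U := fun x hx =>
      (hball (Metric.ball_subset_ball hρρ₀.le hx)).1
    have h1 : ENNReal.ofReal ((C * ρ ^ 2) ^ (-t)) * volume (Metric.ball y ρ) ≤ M := by
      calc ENNReal.ofReal ((C * ρ ^ 2) ^ (-t)) * volume (Metric.ball y ρ)
          = ∫⁻ x in Metric.ball y ρ, ENNReal.ofReal ((C * ρ ^ 2) ^ (-t)) := by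
            rw [setLIntegral_const]
        _ ≤ ∫⁻ x in Metric.ball y ρ, ENNReal.ofReal ((F x) ^ (-t)) := by
            refine lintegral_mono_ae ?_
            filter_upwards [ae_restrict_of_ae (ae_eval_ne_zero g₀ hg₀'),
              ae_restrict_mem measurableSet_ball] with x hx hxb
            have hFpos : 0 < F x := by
              refine lt_of_lt_of_le (by positivity : 0 < ‖eval x g₀‖ ^ 2) ?_
              exact Finset.single_le_sum (f := fun g => ‖eval x g‖ ^ 2)
                (fun _ _ => by positivity) hg₀
            have hFle : F x ≤ C * ρ ^ 2 := by
              have := (hball (Metric.ball_subset_ball hρρ₀.le hxb)).2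
              simp only [Set.mem_ofPred_eq, norm_pow, norm_norm] at this
              rw [Real.norm_of_nonneg hFpos.le] at this
              refine this.trans ?_
              have : ‖x - y‖ ≤ ρ := by rw [← dist_eq_norm]; exact (Metric.mem_ball.1 hxb).le
              gcongr
            exact ENNReal.ofReal_le_ofReal
              (Real.rpow_le_rpow_of_nonpos hFpos hFle (by linarith))
        _ ≤ M := lintegral_mono_set hsub
    rw [Measure.addHaar_ball_of_pos _ _ hρ, hfr] at h1
    have h2 := ENNReal.toReal_mono hMtop.ne h1
    rw [ENNReal.toReal_mul, ENNReal.toReal_mul, ENNReal.toReal_ofReal (by positivity),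
      ENNReal.toReal_ofReal (by positivity)] at h2
    refine le_trans (le_of_eq ?_) h2
    rw [Real.mul_rpow hC.le (by positivity), ← Real.rpow_natCast ρ 2, ← Real.rpow_mul hρ.le,
      ← Real.rpow_natCast ρ (2 * n), sub_eq_add_neg, Real.rpow_add hρ]
    push_cast
    rw [mul_neg]
    ring
  have htend := tendsto_rpow_neg_nhdsGT_zero (y := 2 * (n : ℝ) - 2 * t) (by linarith)
  have hev := htend.eventually_gt_atTop (M.toReal / (m * C ^ (-t)))
  have hev2 : ∀ᶠ ρ : ℝ in nhdsWithin 0 (Set.Ioi 0), ρ < ρ₀ :=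
    nhdsWithin_le_nhds (eventually_lt_nhds hρ₀)
  obtain ⟨ρ, ⟨h1, h2⟩, h3⟩ := ((hev.and hev2).and self_mem_nhdsWithin).exists
  exact absurd (hbound ρ h3 h2) (not_le.2 h1)

/-! ### The integrability estimate -/

lemma tsum_scales_lt_top {δ ε : ℝ} (hδ : 0 < δ) (hε : 0 < ε) :
    ∑' j : ℕ, ENNReal.ofReal ((δ * (1 / 2) ^ (j + 1)) ^ ε) < ⊤ := by
  have hq : ((1 / 2 : ℝ) ^ ε) < 1 := Real.rpow_lt_one (by norm_num) (by norm_num) hε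
  have hs : Summable fun j : ℕ => (δ * (1 / 2 : ℝ) ^ (j + 1)) ^ ε := by
    have := ((summable_geometric_of_lt_one (by positivity) hq).mul_left (δ ^ ε * (1 / 2 : ℝ) ^ ε))
    refine this.congr fun j => ?_
    rw [Real.mul_rpow hδ.le (by positivity), ← Real.rpow_natCast, ← Real.rpow_natCast,
      ← Real.rpow_mul (by norm_num), ← Real.rpow_mul (by norm_num), mul_assoc,
      ← Real.rpow_add (by norm_num)]
    push_cast
    ring_nf
  exact hs.tsum_ofReal_lt_top

/-- The comparison at a single scale: a bound `v ≤ C φ^{r+k}` at a scale `τ ≥ φ / Λ` gives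
`φ^{-2dt} ≤ C^{2s} Λ^β τ^β v^{-2s}` for `β = 2 ((r + k) s - d t) > 0`. -/
lemma rpow_le_at_scale {C φ τ Λ v s t β : ℝ} {r k d : ℕ} (hC : 0 < C) (hφ : 0 < φ) (hτ : 0 < τ)
    (hΛ : 0 < Λ) (hv : 0 < v) (hle : v ≤ C * φ ^ (r + k)) (hφτ : φ ≤ Λ * τ) (hs : 0 < s)
    (hβ : β = 2 * ((r + k) * s - d * t)) (hβ0 : 0 < β) :
    (φ ^ (2 * d)) ^ (-t) ≤ C ^ (2 * s) * Λ ^ β * τ ^ β * v ^ (-2 * s) := by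
  have h1 : (C * φ ^ (r + k)) ^ (-2 * s) ≤ v ^ (-2 * s) :=
    Real.rpow_le_rpow_of_nonpos hv hle (by linarith)
  have h2 : φ ^ β ≤ Λ ^ β * τ ^ β := by
    rw [← Real.mul_rpow hΛ.le hτ.le]
    exact Real.rpow_le_rpow hφ.le hφτ hβ0.le
  calc (φ ^ (2 * d)) ^ (-t) = C ^ (2 * s) * φ ^ β * (C * φ ^ (r + k)) ^ (-2 * s) := by
        rw [Real.mul_rpow hC.le (by positivity), ← Real.rpow_natCast φ (2 * d),
          ← Real.rpow_natCast φ (r + k), ← Real.rpow_mul hφ.le, ← Real.rpow_mul hφ.le]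
        have e1 : C ^ (2 * s) * C ^ (-2 * s) = 1 := by
          rw [← Real.rpow_add hC]; simp
        have e2 : φ ^ (((2 * d : ℕ) : ℝ) * -t) =
            φ ^ β * φ ^ (((r + k : ℕ) : ℝ) * (-2 * s)) := by
          rw [← Real.rpow_add hφ]; congr 1; rw [hβ]; push_cast; ring
        rw [e2]
        linear_combination (-(φ ^ β * φ ^ (((r + k : ℕ) : ℝ) * (-2 * s)))) * e1
    _ ≤ C ^ (2 * s) * (Λ ^ β * τ ^ β) * v ^ (-2 * s) := by gcongr
    _ = C ^ (2 * s) * Λ ^ β * τ ^ β * v ^ (-2 * s) := by ring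

/-- Integrability of `‖f‖^{-2s}` near the origin forces local integrability of `F^{-t}`, where
`F = ∑ ‖g‖²` over a finite set of polynomials containing all `f_{r+i}^{d/(k-i)}`, as soon as
`n + d t < (r + k) s`. With `φ = F^{1/(2d)}` the function `F^{-t}` is dominated at almost every
point by a multiple of `∑_j τ_j^β ‖f(τ_j x)‖^{-2s}` over the dyadic scales `τ_j`, where
`β = 2 ((r + k) s - d t) > 2 n`. -/
lemma integrableOn_ball {n : ℕ} (f : MvPolynomial (Fin n) ℂ) (r k d : ℕ) (hk : 1 ≤ k)
    (hd : 0 < d) (hdvd : ∀ i < k, (k - i) ∣ d)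
    (hlow : ∀ i < r, homogeneousComponent i f = 0)
    (hfr : homogeneousComponent r f ≠ 0)
    (G : Finset (MvPolynomial (Fin n) ℂ))
    (hG : ∀ i < k, (homogeneousComponent (r + i) f) ^ (d / (k - i)) ∈ G)
    {s t : ℝ} (hs : 0 < s) (hst : n + d * t < (r + k) * s)
    {U : Set (Fin n → ℂ)} (hU : U ∈ nhds 0)
    (hint : IntegrableOn (fun x : Fin n → ℂ => ‖eval x f‖ ^ (-2 * s)) U)
    {R : ℝ} (hR : 0 < R) :
    IntegrableOn (fun x : Fin n → ℂ => (∑ g ∈ G, ‖eval x g‖ ^ 2) ^ (-t)) (Metric.ball 0 R) := by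
  have hf0 : f ≠ 0 := by rintro rfl; simp at hfr
  have hd' : (0 : ℝ) < d := by exact_mod_cast hd
  set F : (Fin n → ℂ) → ℝ := fun x => ∑ g ∈ G, ‖eval x g‖ ^ 2 with hF
  have hFcont : Continuous F :=
    continuous_finsetSum _ fun g _ => (continuous_evalPoly g).norm.pow 2
  have hF0 : ∀ x, 0 ≤ F x := fun x => Finset.sum_nonneg fun _ _ => by positivity
  -- `φ = F^{1/(2d)}` is normalised so that `‖f_{r+i}‖ ≤ φ^{k-i}` for all `i < k`.
  obtain ⟨φ, hφcont, hφ0, hFφ⟩ : ∃ φ : (Fin n → ℂ) → ℝ,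
      Continuous φ ∧ (∀ x, 0 ≤ φ x) ∧ ∀ x, F x = φ x ^ (2 * d) :=
    ⟨fun x => F x ^ (((2 * d : ℕ) : ℝ)⁻¹), hFcont.rpow_const fun _ => Or.inr (by positivity),
      fun x => Real.rpow_nonneg (hF0 x) _,
      fun x => (Real.rpow_inv_natCast_pow (hF0 x) (by omega)).symm⟩
  have hcomp : ∀ x, ∀ i < k, ‖eval x (homogeneousComponent (r + i) f)‖ ≤ φ x ^ (k - i) := by
    intro x i hi
    obtain ⟨m, hm⟩ := hdvd i hi
    have hki : 0 < k - i := by omega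
    have hdm : d / (k - i) = m := by rw [hm, Nat.mul_div_cancel_left _ hki]
    have hm0 : m ≠ 0 := by rintro rfl; omega
    have h1 : ‖eval x ((homogeneousComponent (r + i) f) ^ m)‖ ^ 2 ≤ F x :=
      Finset.single_le_sum (f := fun g => ‖eval x g‖ ^ 2)
        (fun _ _ => by positivity) (hdm ▸ hG i hi)
    rw [hFφ, map_pow, norm_pow, ← pow_mul] at h1
    have h2 : φ x ^ (2 * d) = (φ x ^ (k - i)) ^ (m * 2) := by
      rw [← pow_mul]; congr 1; rw [hm]; ring
    rw [h2] at h1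
    exact (pow_le_pow_iff_left₀ (norm_nonneg _) (pow_nonneg (hφ0 x) _) (by omega)).1 h1
  obtain ⟨C, hC, hCb⟩ := norm_eval_smul_le f r k hlow R
  obtain ⟨K₀, hK₀⟩ := (isCompact_closedBall (0 : Fin n → ℂ) R).exists_bound_of_continuousOn
    hφcont.continuousOn
  obtain ⟨K, hK1, hφK⟩ : ∃ K : ℝ, 1 ≤ K ∧ ∀ x ∈ Metric.ball (0 : Fin n → ℂ) R, φ x ≤ K :=
    ⟨max 1 K₀, le_max_left _ _, fun x hx =>
      ((le_abs_self _).trans (hK₀ x (Metric.ball_subset_closedBall hx))).trans (le_max_right _ _)⟩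
  have hK0 : 0 < K := one_pos.trans_le hK1
  obtain ⟨ρ, hρ, hρU⟩ := Metric.mem_nhds_iff.1 hU
  obtain ⟨δ, hδ0, hδ1, hδR⟩ : ∃ δ : ℝ, 0 < δ ∧ δ ≤ 1 ∧ δ * R ≤ ρ := by
    refine ⟨min 1 (ρ / R), lt_min one_pos (by positivity), min_le_left _ _, ?_⟩
    calc min 1 (ρ / R) * R ≤ ρ / R * R := by gcongr; exact min_le_right _ _
      _ = ρ := by field_simp
  set τ : ℕ → ℝ := fun j => δ * (1 / 2) ^ (j + 1) with hτ
  have hτ0 : ∀ j, 0 < τ j := fun j => by positivity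
  have hhalf : ∀ j : ℕ, ((1 : ℝ) / 2) ^ (j + 1) ≤ 1 := fun j =>
    pow_le_one₀ (by norm_num) (by norm_num)
  have hτδ : ∀ j, τ j ≤ δ := fun j => mul_le_of_le_one_right hδ0.le (hhalf j)
  set ε : ℝ := 2 * ((r + k) * s - d * t - n) with hε
  have hε0 : 0 < ε := by rw [hε]; linarith
  set β : ℝ := 2 * ((r + k) * s - d * t) with hβ
  have hβ0 : 0 < β := by
    rw [hβ]; have : (0 : ℝ) ≤ n := by positivity
    linarith
  set Λ : ℝ := 2 * K / δ with hΛ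
  have hΛ0 : 0 < Λ := by positivity
  set A : ℝ := C ^ (2 * s) * Λ ^ β with hA
  have hA0 : 0 < A := by positivity
  set h : (Fin n → ℂ) → ENNReal := fun x => ENNReal.ofReal (‖eval x f‖ ^ (-2 * s)) with hh
  have hhm : Measurable h := by
    have : Measurable fun x : Fin n → ℂ => ‖eval x f‖ ^ (-2 * s) :=
      (continuous_evalPoly f).norm.measurable.pow_const _
    exact this.ennreal_ofReal
  -- The points with some `f (τ_j x) = 0`, or with `F x = 0`, are discarded as a null set; at them
  -- the real powers take the value `0` rather than `∞`.
  have hpt : ∀ᵐ x ∂volume.restrict (Metric.ball (0 : Fin n → ℂ) R),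
      ENNReal.ofReal (F x ^ (-t)) ≤
        ∑' j, ENNReal.ofReal (A * τ j ^ β) * h (τ j • x) := by
    have hae : ∀ᵐ x : Fin n → ℂ, ∀ j, eval (τ j • x) f ≠ 0 := by
      rw [ae_all_iff]
      intro j
      exact (Measure.quasiMeasurePreserving_smul (volume : Measure (Fin n → ℂ)) (hτ0 j).ne').ae
        (ae_eval_ne_zero f hf0)
    filter_upwards [ae_restrict_of_ae hae, ae_restrict_of_ae (ae_eval_ne_zero _ hfr),
      ae_restrict_mem measurableSet_ball] with x hx hxr hxb
    have hφpos : 0 < φ x := by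
      refine (hφ0 x).lt_of_ne fun h0 => hxr ?_
      have := hcomp x 0 hk
      rw [← h0, zero_pow (by omega), add_zero] at this
      simpa using this
    -- Choose the dyadic scale comparable with `φ x`: `τ j ≤ φ x ≤ Λ * τ j`.
    obtain ⟨j, hj1, hj2⟩ := exists_nat_pow_near_of_lt_one (x := φ x / K) (y := (1 / 2 : ℝ))
      (div_pos hφpos hK0) ((div_le_one hK0).2 (hφK x hxb)) (by norm_num) (by norm_num)
    have hτφ : τ j ≤ φ x := by
      calc τ j ≤ 1 * (1 / 2) ^ (j + 1) := by simp only [hτ]; gcongr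
        _ ≤ φ x / K := by rw [one_mul]; exact hj1.le
        _ ≤ φ x := div_le_self hφpos.le hK1
    have hφτ : φ x ≤ Λ * τ j := by
      rw [div_le_iff₀ hK0] at hj2
      have : Λ * τ j = (1 / 2) ^ j * K := by
        simp only [hΛ, hτ, pow_succ]; field_simp
      rw [this]; exact hj2
    have hle := hCb x hxb (φ x) (τ j) (hτ0 j).le hτφ ((hτδ j).trans hδ1) (hcomp x)
    have hpos : 0 < ‖eval (τ j • x) f‖ := norm_pos_iff.2 (hx j)
    have hFt : F x ^ (-t) ≤ A * τ j ^ β * ‖eval (τ j • x) f‖ ^ (-2 * s) := by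
      rw [hFφ x]
      exact rpow_le_at_scale hC hφpos (hτ0 j) hΛ0 hpos hle hφτ hs hβ hβ0
    calc ENNReal.ofReal (F x ^ (-t))
        ≤ ENNReal.ofReal (A * τ j ^ β * ‖eval (τ j • x) f‖ ^ (-2 * s)) :=
          ENNReal.ofReal_le_ofReal hFt
      _ = ENNReal.ofReal (A * τ j ^ β) * h (τ j • x) := by
          rw [ENNReal.ofReal_mul (by have := hτ0 j; positivity)]
      _ ≤ _ := ENNReal.le_tsum j
  set M : ENNReal := ∫⁻ x in U, h x with hM
  have hMtop : M < ⊤ := hint.lintegral_lt_top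
  have hfin : ∫⁻ x in Metric.ball (0 : Fin n → ℂ) R, ENNReal.ofReal (F x ^ (-t)) < ⊤ := by
    calc ∫⁻ x in Metric.ball (0 : Fin n → ℂ) R, ENNReal.ofReal (F x ^ (-t))
        ≤ ∫⁻ x in Metric.ball (0 : Fin n → ℂ) R,
            ∑' j, ENNReal.ofReal (A * τ j ^ β) * h (τ j • x) := lintegral_mono_ae hpt
      _ = ∑' j, ENNReal.ofReal (A * τ j ^ β) *
            ∫⁻ x in Metric.ball (0 : Fin n → ℂ) R, h (τ j • x) := by
          have hm : ∀ j, Measurable fun x : Fin n → ℂ => h (τ j • x) := fun j =>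
            hhm.comp (measurable_const_smul (τ j))
          rw [lintegral_tsum fun j => ((hm j).const_mul _).aemeasurable]
          exact tsum_congr fun j => lintegral_const_mul _ (hm j)
      _ ≤ ∑' j, (ENNReal.ofReal A * M) * ENNReal.ofReal (τ j ^ ε) := by
          refine ENNReal.tsum_le_tsum fun j => ?_
          have hj := hτ0 j
          rw [setLIntegral_comp_smul hhm R hj]
          have hsub : Metric.ball (0 : Fin n → ℂ) (τ j * R) ⊆ U :=
            (Metric.ball_subset_ball
              ((mul_le_mul_of_nonneg_right (hτδ j) hR.le).trans hδR)).trans hρU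
          have hpow : τ j ^ β * (τ j ^ (2 * n))⁻¹ = τ j ^ ε := by
            rw [← Real.rpow_natCast, ← Real.rpow_neg hj.le, ← Real.rpow_add hj]
            congr 1; rw [hβ, hε]; push_cast; ring
          calc ENNReal.ofReal (A * τ j ^ β) * (ENNReal.ofReal ((τ j ^ (2 * n))⁻¹) *
                ∫⁻ x in Metric.ball (0 : Fin n → ℂ) (τ j * R), h x)
              ≤ ENNReal.ofReal (A * τ j ^ β) * (ENNReal.ofReal ((τ j ^ (2 * n))⁻¹) * M) := by
                exact mul_le_mul_right (mul_le_mul_right (lintegral_mono_set hsub) _) _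
            _ = (ENNReal.ofReal A * M) * ENNReal.ofReal (τ j ^ ε) := by
                rw [← hpow, ENNReal.ofReal_mul hA0.le,
                  ENNReal.ofReal_mul (p := τ j ^ β) (by positivity)]
                ring
      _ = (ENNReal.ofReal A * M) * ∑' j, ENNReal.ofReal (τ j ^ ε) := ENNReal.tsum_mul_left
      _ < ⊤ := ENNReal.mul_lt_top (ENNReal.mul_lt_top ENNReal.ofReal_lt_top hMtop)
          (tsum_scales_lt_top hδ0 hε0)
  refine ⟨(measurable_sum_rpow G (-t)).aestronglyMeasurable, ?_⟩
  rw [hasFiniteIntegral_iff_ofReal (Filter.Eventually.of_forall fun x =>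
    Real.rpow_nonneg (hF0 x) _)]
  exact hfin

/-! ### The inequality of thresholds -/

/-- The common form of both inequalities: `d` is any positive multiple of `1, …, k`. -/
lemma lct_bound {n : ℕ} (f : MvPolynomial (Fin n) ℂ) (r k d : ℕ) (hr : 1 ≤ r) (hk : 1 ≤ k)
    (hd : 0 < d) (hdvd : ∀ i < k, (k - i) ∣ d)
    (hlow : ∀ i < r, homogeneousComponent i f = 0)
    (hfr : homogeneousComponent r f ≠ 0) :
    ((r : ℝ) + k) * lctAt f 0 ≤ n + d * lctIdeal (Ideal.span {g | ∃ i, i < k ∧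
      g = (homogeneousComponent (r + i) f) ^ (d / (k - i))}) := by
  classical
  set I : Ideal (MvPolynomial (Fin n) ℂ) := Ideal.span {g | ∃ i, i < k ∧
      g = (homogeneousComponent (r + i) f) ^ (d / (k - i))} with hI
  have hd' : (0 : ℝ) < d := by exact_mod_cast hd
  have hrk : (0 : ℝ) < (r : ℝ) + k := by positivity
  set G : Finset (MvPolynomial (Fin n) ℂ) :=
    (Finset.range k).image fun i => (homogeneousComponent (r + i) f) ^ (d / (k - i)) with hG
  have hGI : Ideal.span (G : Set (MvPolynomial (Fin n) ℂ)) = I := by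
    rw [hI]; congr 1; ext g; simp [hG, eq_comm]
  have hGmem : ∀ i < k, (homogeneousComponent (r + i) f) ^ (d / (k - i)) ∈ G := fun i hi =>
    Finset.mem_image.2 ⟨i, Finset.mem_range.2 hi, rfl⟩
  have hIbot : I ≠ ⊥ := by
    intro h0
    have hmem : (homogeneousComponent (r + 0) f) ^ (d / (k - 0)) ∈ I :=
      Ideal.subset_span ⟨0, hk, rfl⟩
    rw [h0, Ideal.mem_bot] at hmem
    have hne : d / (k - 0) ≠ 0 :=
      (Nat.div_pos (Nat.le_of_dvd hd (hdvd 0 hk)) (by omega)).ne'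
    exact hfr ((pow_eq_zero_iff hne).1 hmem)
  have hzero : ∀ g ∈ I, eval (0 : Fin n → ℂ) g = 0 := by
    intro g hg
    have : I ≤ RingHom.ker (eval (0 : Fin n → ℂ)) := by
      rw [hI, Ideal.span_le]
      rintro _ ⟨i, hi, rfl⟩
      have h1 := eval_smul_homogeneousComponent f (r + i) 0 0
      rw [Complex.ofReal_zero, zero_pow (by omega), zero_mul, zero_smul] at h1
      have h2 : d / (k - i) ≠ 0 :=
        (Nat.div_pos (Nat.le_of_dvd hd (hdvd i hi)) (by omega)).ne'
      change eval (0 : Fin n → ℂ) (_ ^ _) = 0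
      rw [map_pow, h1, zero_pow h2]
    exact this hg
  have hnonneg : ∀ y, 0 ≤ lctIdealAt I y := fun y =>
    Real.sSup_nonneg fun _ h => h.1.le
  have hnonneg' : 0 ≤ lctIdeal I := by
    refine Real.sInf_nonneg ?_
    rintro _ ⟨y, _, rfl⟩
    exact hnonneg y
  rw [← le_div_iff₀' hrk]
  refine Real.sSup_le ?_ (by positivity)
  rintro s ⟨hs, U, hU, hint⟩
  rw [le_div_iff₀' hrk, ← sub_le_iff_le_add', ← div_le_iff₀' hd']
  -- It remains to bound the threshold of `I` at each zero `y` from below by `((r+k)s - n)/d`.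
  refine le_csInf ⟨_, 0, hzero, rfl⟩ ?_
  rintro _ ⟨y, hy, rfl⟩
  refine le_of_forall_lt_imp_le_of_dense fun t htlt => ?_
  rcases le_or_gt t 0 with ht | ht
  · exact ht.trans (hnonneg y)
  refine le_csSup (bddAbove_lctIdealAt I hIbot y hy) ⟨ht, G, hGI, Metric.ball 0 (‖y‖ + 1), ?_, ?_⟩
  · exact Metric.isOpen_ball.mem_nhds (by simp)
  · rw [lt_div_iff₀' hd'] at htlt
    exact integrableOn_ball f r k d hk hd hdvd hlow hfr G hGmem hs (by linarith) hU hint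
      (by positivity)

/-- Let `f = ∑_{i≥r} f_i` with `f_r ≠ 0`. For `k ≥ 1`, with `d_k = lcm(1,…,k)` and
`J_k(f)` the ideal generated by `f_{r+i}^{d_k/(k−i)}` for `0 ≤ i ≤ k−1`, one has
`(r+k)·c₀(f) ≤ n + d_k·c(J_k(f))`; in particular, for `k = 2`,
`(r+2)·c₀(f) ≤ n + 2·c((f_r, f_{r+1}²))`. -/
theorem stmt14 {n : ℕ} (f : MvPolynomial (Fin n) ℂ) (r k : ℕ)
    (hf : 0 < f.totalDegree) (hr : 1 ≤ r) (hk : 1 ≤ k)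
    (hlow : ∀ i < r, MvPolynomial.homogeneousComponent i f = 0)
    (hfr : MvPolynomial.homogeneousComponent r f ≠ 0)
    (dk : ℕ) (hdk : dk = (Finset.Icc 1 k).lcm id)
    (Jk : Ideal (MvPolynomial (Fin n) ℂ))
    (hJk : Jk = Ideal.span {g | ∃ i, i < k ∧
      g = (MvPolynomial.homogeneousComponent (r + i) f) ^ (dk / (k - i))}) :
    ((r : ℝ) + (k : ℝ)) * lctAt f 0 ≤ (n : ℝ) + (dk : ℝ) * lctIdeal Jk ∧
      ((r : ℝ) + 2) * lctAt f 0 ≤ (n : ℝ) + 2 * lctIdeal (Ideal.span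
        {MvPolynomial.homogeneousComponent r f,
         (MvPolynomial.homogeneousComponent (r + 1) f) ^ 2}) := by
  have hdvd : ∀ i < k, (k - i) ∣ dk := fun i hi => by
    rw [hdk]
    exact Finset.dvd_lcm (f := id) (Finset.mem_Icc.2 ⟨by omega, by omega⟩)
  have hd : 0 < dk := by
    refine Nat.pos_of_ne_zero fun h0 => ?_
    rw [hdk, Finset.lcm_eq_zero_iff] at h0
    simp at h0
  refine ⟨hJk ▸ lct_bound f r k dk hr hk hd hdvd hlow hfr, ?_⟩
  have h2 := lct_bound f r 2 2 hr (by norm_num) (by norm_num)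
    (fun i hi => by interval_cases i <;> norm_num) hlow hfr
  have hset : {g | ∃ i, i < 2 ∧ g = (homogeneousComponent (r + i) f) ^ (2 / (2 - i))} =
      ({homogeneousComponent r f, (homogeneousComponent (r + 1) f) ^ 2} :
        Set (MvPolynomial (Fin n) ℂ)) := by
    ext g
    simp only [Set.mem_ofPred_eq, Set.mem_insert_iff, Set.mem_singleton_iff]
    constructor
    · rintro ⟨i, hi, rfl⟩
      interval_cases i <;> simp
    · rintro (rfl | rfl)
      · exact ⟨0, by norm_num, by simp⟩
      · exact ⟨1, by norm_num, by simp⟩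
  rw [hset] at h2
  exact_mod_cast h2
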